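/- The complex vector space of homogeneous polynomials g of degree 6 in ℂ[y₀,y₁,y₂,y₃] satisfying, for every singular point of B₆ = 0 represented by P ∈ ℂ⁴∖{0} with its associated pair of indices 1 ≤ i < j ≤ 3 such that Sᵢ(P) = Sⱼ(P) = 0, both g(P) = 0 and Σₜ (∂g/∂yₜ)(P)·wₜ = 0 for every w ∈ ℂ⁴ with Σₜ (∂Sᵢ/∂yₜ)(P)·wₜ = Σₜ (∂Sⱼ/∂yₜ)(P)·wₜ = 0, has dimension 33 (equivalently, these conditions at the 27 cusps have rank exactly 51 on the 84-dimensional space of sextic forms). -/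

import Mathlib

/-!
At the cusp `P = (1, 0, a, b)` the tangent planes of `S₂` and `S₃` meet in the plane spanned by `P`
and the coordinate vector of `y₁`, so by Euler's formula the cusp condition on a sextic `g` says
that `g` and `∂g/∂y₁` vanish at `P`; the other two families are alike. Only monomials of degree `0`
in `y₁` contribute to `g(P)`, and only those of degree `1` in `y₁` to `(∂g/∂y₁)(P)`. As `a` and `b`
range independently over the three cube roots of `-1/3`, the monomials `a ^ s * b ^ t` with
`s, t < 3` are linearly independent, so the conditions decouple according to the residues modulo `3`
of the exponents of `y₁, y₂, y₃`.

In the residue class `r` there is one condition for each `i` with `rᵢ ≤ 1`: the sum of the suitably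
scaled coefficients over the monomials of the class of degree at most `1` in `yᵢ` vanishes. If
`r₁ + r₂ + r₃ ≤ 3` these conditions are independent, because `y ^ r` enters all of them and
`yⱼ ^ 3 * y ^ r` all but the `j`-th; otherwise the class contains a single monomial and the rank is
at most `1`. Over the `27` classes the ranks add up to `51`, and `84 - 51 = 33`.
-/

open MvPolynomial

/-- The Fermat cubic `R = y₀³ + y₁³ + y₂³ + y₃³`. -/
noncomputable def fermatR : MvPolynomial (Fin 4) ℂ := X 0 ^ 3 + X 1 ^ 3 + X 2 ^ 3 + X 3 ^ 3

/-- The cubic `S₁ = y₁³ + R`. -/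
noncomputable def fermatS1 : MvPolynomial (Fin 4) ℂ := X 1 ^ 3 + fermatR

/-- The cubic `S₂ = y₂³ + R`. -/
noncomputable def fermatS2 : MvPolynomial (Fin 4) ℂ := X 2 ^ 3 + fermatR

/-- The cubic `S₃ = y₃³ + R`. -/
noncomputable def fermatS3 : MvPolynomial (Fin 4) ℂ := X 3 ^ 3 + fermatR

/-- The cubic `S = y₁·y₂·y₃`. -/
noncomputable def fermatQ : MvPolynomial (Fin 4) ℂ := X 1 * X 2 * X 3
/-- The linear functional `g ↦ Σₜ (∂g/∂yₜ)(P)·wₜ` (the differential of `g` at `P`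
evaluated on the vector `w`). -/
noncomputable def dirDeriv (P w : Fin 4 → ℂ) : MvPolynomial (Fin 4) ℂ →ₗ[ℂ] ℂ :=
  ∑ t : Fin 4, w t •
    ((aeval P : MvPolynomial (Fin 4) ℂ →ₐ[ℂ] ℂ).toLinearMap ∘ₗ
      (pderiv t : Derivation ℂ (MvPolynomial (Fin 4) ℂ) (MvPolynomial (Fin 4) ℂ)).toLinearMap)

/-- The conditions imposed at a cusp `P` with associated pair `(Sᵢ, Sⱼ)`: vanishing
at `P`, and vanishing of the differential at `P` on the `2`-plane of vectors `w`
annihilated by the differentials of `Sᵢ` and `Sⱼ` at `P`. -/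
noncomputable def cuspCondition (P : Fin 4 → ℂ) (Si Sj : MvPolynomial (Fin 4) ℂ) :
    Submodule ℂ (MvPolynomial (Fin 4) ℂ) :=
  LinearMap.ker (aeval P : MvPolynomial (Fin 4) ℂ →ₐ[ℂ] ℂ).toLinearMap ⊓
    ⨅ (w : Fin 4 → ℂ) (_ : dirDeriv P w Si = 0 ∧ dirDeriv P w Sj = 0),
      LinearMap.ker (dirDeriv P w)

/-- The space of homogeneous sextic forms adapted to the `27` cusps of the residual
sextic: at `(1,0,a,b)` (pair `(S₂,S₃)`), at `(1,a,0,b)` (pair `(S₁,S₃)`) and at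
`(1,a,b,0)` (pair `(S₁,S₂)`). -/
noncomputable def sexticsAdaptedToFermatCusps : Submodule ℂ (MvPolynomial (Fin 4) ℂ) :=
  homogeneousSubmodule (Fin 4) ℂ 6 ⊓
    ⨅ (a : ℂ) (b : ℂ) (_ : a ^ 3 = -(1/3) ∧ b ^ 3 = -(1/3)),
      (cuspCondition ![1, 0, a, b] fermatS2 fermatS3 ⊓
        cuspCondition ![1, a, 0, b] fermatS1 fermatS3 ⊓
        cuspCondition ![1, a, b, 0] fermatS1 fermatS2)

theorem homogeneousSubmodule_eq_span_monomial (σ R : Type*) [CommSemiring R] (d : ℕ) :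
    homogeneousSubmodule σ R d =
      Submodule.span R
        (Set.range fun e : {e : σ →₀ ℕ // e.degree = d} => monomial e.1 (1 : R)) := by
  refine le_antisymm (fun p hp => ?_) (Submodule.span_le.2 ?_)
  · rw [p.as_sum]
    refine Submodule.sum_mem _ fun e he => ?_
    rw [← mul_one (coeff e p), ← smul_eq_mul, ← smul_monomial]
    exact Submodule.smul_mem _ _ (Submodule.subset_span
      ⟨⟨e, by_contra fun h => mem_support_iff.1 he (hp.coeff_eq_zero h)⟩, rfl⟩)
  · rintro _ ⟨e, rfl⟩
    exact isHomogeneous_monomial _ e.2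

theorem finrank_homogeneousSubmodule (σ R : Type*) [Fintype σ] [CommRing R] [Nontrivial R]
    (d : ℕ) :
    Module.finrank R (homogeneousSubmodule σ R d) = (Fintype.card σ + d - 1).choose d := by
  classical
  have hsym : {e : σ →₀ ℕ // e.degree = d} ≃ Sym σ d := (Sym.equivNatSum σ d).symm
  have : Fintype {e : σ →₀ ℕ // e.degree = d} := Fintype.ofEquiv _ hsym.symm
  have hli : LinearIndependent R fun e : {e : σ →₀ ℕ // e.degree = d} => monomial e.1 (1 : R) := by
    simpa [Function.comp_def] using
      (basisMonomials σ R).linearIndependent.comp _ Subtype.val_injective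
  rw [homogeneousSubmodule_eq_span_monomial, finrank_span_eq_card hli,
    Fintype.card_congr hsym, Sym.card_sym_eq_choose]

theorem sum_mul_aeval_pderiv_of_isHomogeneous {σ R : Type*} [Fintype σ] [CommSemiring R] {d : ℕ}
    {g : MvPolynomial σ R} (hg : g.IsHomogeneous d) (P : σ → R) :
    ∑ t, P t * aeval P (pderiv t g) = d * aeval P g := by
  simpa using congrArg (aeval P) hg.sum_X_mul_pderiv

theorem finrank_submodule_pi {ι K : Type*} [Fintype ι] [Field K] {V : ι → Type*}
    [∀ i, AddCommGroup (V i)] [∀ i, Module K (V i)] [∀ i, FiniteDimensional K (V i)]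
    (p : ∀ i, Submodule K (V i)) :
    Module.finrank K (Submodule.pi Set.univ p) = ∑ i, Module.finrank K (p i) := by
  classical
  let e : Submodule.pi Set.univ p ≃ₗ[K] ∀ i, p i :=
    { toFun := fun x i => ⟨x.1 i, x.2 i trivial⟩
      invFun := fun x => ⟨fun i => x i, fun i _ => (x i).2⟩
      map_add' := fun _ _ => rfl
      map_smul' := fun _ _ => rfl }
  rw [e.finrank_eq, Module.finrank_pi_fintype]

theorem finrank_map_add_finrank_inf_ker {K V W : Type*} [Field K] [AddCommGroup V] [Module K V]
    [AddCommGroup W] [Module K W] (f : V →ₗ[K] W) (p : Submodule K V) [FiniteDimensional K p] :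
    Module.finrank K (p.map f) + Module.finrank K ↥(p ⊓ LinearMap.ker f) =
      Module.finrank K p := by
  rw [← (f.domRestrict p).finrank_range_add_finrank_ker, LinearMap.range_domRestrict,
    LinearMap.ker_domRestrict, ← (Submodule.comapSubtypeEquivOfLe inf_le_left).finrank_eq,
    Submodule.comap_inf, Submodule.comap_subtype_self, top_inf_eq]

theorem card_nthRootsFinset_of_ne_zero {K : Type*} [Field K] [IsAlgClosed K] {q : ℕ}
    [NeZero (q : K)] {a : K} (ha : a ≠ 0) : (Polynomial.nthRootsFinset q a).card = q := by
  classical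
  have hq : 0 < q := (NeZero.of_neZero_natCast K).pos
  obtain ⟨ζ, hζ⟩ := HasEnoughRootsOfUnity.exists_primitiveRoot K q
  rw [Polynomial.nthRootsFinset, ← Multiset.toFinset_eq (hζ.nthRoots_nodup ha), Finset.card_mk,
    hζ.card_nthRoots, if_pos (IsAlgClosed.exists_pow_nat_eq a hq)]

theorem eq_zero_of_sum_mul_prod_pow_eq_zero {σ R : Type*} [Fintype σ] [DecidableEq σ] [CommRing R]
    [IsDomain R] {q : ℕ} {A : Finset R} (hA : q ≤ A.card) {C : (σ → Fin q) → R}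
    (h : ∀ y : σ → R, (∀ j, y j ∈ A) → ∑ r, C r * ∏ j, y j ^ (r j : ℕ) = 0) : C = 0 := by
  let exponent (r : σ → Fin q) : σ →₀ ℕ := Finsupp.equivFunOnFinite.symm fun j => r j
  have exponent_injective : Function.Injective exponent := fun r s hrs =>
    funext fun j => Fin.ext (DFunLike.congr_fun hrs j)
  let p : MvPolynomial σ R := ∑ r, monomial (exponent r) (C r)
  funext r
  have hdeg (j : σ) : p.degreeOf j < A.card := by
    refine (degreeOf_sum_le j _ _).trans_lt ((Finset.sup_lt_iff ((r j).pos.trans_le hA)).2 ?_)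
    intro s _
    refine (degreeOf_lt_iff ((r j).pos.trans_le hA)).2 fun e he => ?_
    rw [Finset.mem_singleton.1 (support_monomial_subset he)]
    exact (s j).is_lt.trans_le hA
  have hp : p = 0 := eq_zero_of_eval_zero_at_prod_finset p (fun _ => A) hdeg fun y hy => by
    simpa [p, exponent, eval_monomial, Finsupp.prod_fintype] using h y hy
  simpa [p, coeff_sum, coeff_monomial, exponent_injective.eq_iff] using
    congrArg (coeff (exponent r)) hp

theorem sum_val_le_mul_pred {n q : ℕ} (r : Fin n → Fin q) : ∑ i, (r i : ℕ) ≤ n * (q - 1) := by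
  simpa using Finset.sum_le_card_nsmul Finset.univ (fun i => (r i : ℕ)) (q - 1) fun i _ =>
    Nat.le_sub_one_of_lt (r i).is_lt

section ResidueSums

variable {n : ℕ} (R : Type*) [CommRing R] (q : ℕ) [NeZero q] (d : ℕ)

/-- The residue class modulo `q` of an exponent vector. -/
def residue (f : Fin n → ℕ) : Fin n → Fin q := fun i => Fin.ofNat q (f i)

/-- The indicator vector of the variables in which a monomial with exponents `f` has degree at most
`1`: such a monomial enters the cusp conditions along `yᵢ = 0` exactly for these `i`. -/
def lowIndicator (f : Fin n → ℕ) : Fin n → R := fun i => if f i ≤ 1 then 1 else 0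

/-- The cusp conditions sorted by residue classes: in the `i`-th component at the class `r`, the
weighted sum of the coefficients of the monomials in `y₀, …, yₙ` whose exponents in `y₁, …, yₙ` lie
in `r` and whose exponent in `yᵢ` is at most `1`. A monomial equals its weight times
`y₁ ^ r₁ ⋯ yₙ ^ rₙ` at every point with `y₀ = 1` and `yⱼ ^ q = ω` for all other `j`. -/
noncomputable def residueSums (ω : R) :
    MvPolynomial (Fin (n + 1)) R →ₗ[R] (Fin n → Fin q) → Fin n → R :=
  (basisMonomials (Fin (n + 1)) R).constr R fun e =>
    ω ^ (∑ i, Fin.tail e i / q) • Pi.single (residue q (Fin.tail e)) (lowIndicator R (Fin.tail e))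

/-- The values that `residueSums` takes at the class `r` on forms of degree `d`. The exponent of
`y₀` is whatever is left of `d`, so the other exponents are only subject to `∑ i, f i ≤ d`. -/
def residueBlock (r : Fin n → Fin q) : Submodule R (Fin n → R) :=
  Submodule.span R (lowIndicator R '' {f | ∑ i, f i ≤ d ∧ residue q f = r})

/-- The dimension of `residueBlock` at a class `r` with `∑ i, r i ≤ d`. -/
def residueBlockRank (r : Fin n → Fin q) : ℕ :=
  let m := Fintype.card {i // (r i : ℕ) ≤ 1}
  if ∑ i, (r i : ℕ) + q ≤ d then m else min m 1

variable {R} {q} {d}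

theorem residueSums_monomial (ω c : R) (e : Fin (n + 1) →₀ ℕ) :
    residueSums R q ω (monomial e c) =
      (c * ω ^ (∑ i, Fin.tail e i / q)) •
        Pi.single (residue q (Fin.tail e)) (lowIndicator R (Fin.tail e)) := by
  have hbasis : residueSums R q ω (monomial e 1) = ω ^ (∑ i, Fin.tail e i / q) •
      Pi.single (residue q (Fin.tail e)) (lowIndicator R (Fin.tail e)) := by
    rw [← congrFun (coe_basisMonomials _ R) e]
    exact Module.Basis.constr_basis ..
  have hsmul : monomial e c = c • monomial e 1 := by rw [smul_monomial, smul_eq_mul, mul_one]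
  rw [hsmul, map_smul, hbasis, smul_smul]

theorem exists_degree_eq_tail_eq {f : Fin n → ℕ} (hf : ∑ i, f i ≤ d) :
    ∃ e : Fin (n + 1) →₀ ℕ, e.degree = d ∧ Fin.tail e = f := by
  refine ⟨Finsupp.cons (d - ∑ i, f i) (Finsupp.equivFunOnFinite.symm f), ?_, ?_⟩
  · simp [Finsupp.degree_eq_sum, Fin.sum_univ_succ, hf]
  · funext i
    simp [Fin.tail]

theorem sum_tail_le_degree (e : Fin (n + 1) →₀ ℕ) : ∑ i, Fin.tail e i ≤ e.degree := by
  rw [Finsupp.degree_eq_sum, Fin.sum_univ_succ]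
  exact Nat.le_add_left _ _

theorem map_residueSums_homogeneousSubmodule {ω : R} (hω : IsUnit ω) :
    (homogeneousSubmodule (Fin (n + 1)) R d).map (residueSums R q ω) =
      Submodule.pi Set.univ (residueBlock R q d) := by
  refine le_antisymm ?_ ?_
  · rw [homogeneousSubmodule_eq_span_monomial, Submodule.map_span_le]
    rintro _ ⟨⟨e, rfl⟩, rfl⟩
    rw [residueSums_monomial]
    refine Submodule.smul_mem _ _ (Submodule.le_comap_single_pi _ (Submodule.subset_span ?_))
    exact ⟨_, ⟨sum_tail_le_degree e, rfl⟩, rfl⟩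
  · rw [← Submodule.iSup_map_single, iSup_le_iff]
    intro r
    rw [residueBlock, Submodule.map_span_le]
    rintro _ ⟨f, ⟨hf, rfl⟩, rfl⟩
    obtain ⟨e, he, rfl⟩ := exists_degree_eq_tail_eq hf
    have hmem := Submodule.mem_map_of_mem (f := residueSums R q ω)
      ((mem_homogeneousSubmodule d _).2 (isHomogeneous_monomial (1 : R) he))
    rw [residueSums_monomial] at hmem
    exact (Submodule.smul_mem_iff_of_isUnit _ (isUnit_one.mul (hω.pow _))).1 hmem

theorem residue_le_one_of_le_one {f : Fin n → ℕ} {i : Fin n} (h : f i ≤ 1) :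
    (residue q f i : ℕ) ≤ 1 :=
  (Nat.mod_le _ _).trans h

theorem residue_eq_and_le_one_iff {ε : ℕ} (hε : ε ≤ 1) (hq : 2 ≤ q) (f : Fin n → ℕ) (i : Fin n) :
    (residue q f i : ℕ) = ε ∧ f i ≤ 1 ↔ f i = ε := by
  have hmod (h : f i ≤ 1) : (residue q f i : ℕ) = f i := Nat.mod_eq_of_lt (h.trans_lt hq)
  refine ⟨fun h => (hmod h.2).symm.trans h.1, fun h => ?_⟩
  have hle : f i ≤ 1 := h.trans_le hε
  exact ⟨(hmod hle).trans h, hle⟩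

theorem prod_pow_eq_prod_pow_residue {M : Type*} [CommMonoid M] {y : Fin n → M} {a : M}
    (hy : ∀ j, y j ^ q = a) (f : Fin n → ℕ) :
    ∏ j, y j ^ f j = a ^ (∑ j, f j / q) * ∏ j, y j ^ (residue q f j : ℕ) := by
  rw [← Finset.prod_pow_eq_pow_sum, ← Finset.prod_mul_distrib]
  refine Finset.prod_congr rfl fun j _ => ?_
  rw [← hy j, ← pow_mul, ← pow_add, residue, Fin.val_ofNat, Nat.div_add_mod]

theorem residue_coe (r : Fin n → Fin q) : residue q (fun i => (r i : ℕ)) = r :=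
  funext fun i => Fin.ofNat_val_eq_self (r i)

theorem residue_add_single (f : Fin n → ℕ) (j : Fin n) :
    residue q (f + Pi.single j q) = residue q f := by
  funext i
  refine Fin.ext ?_
  obtain rfl | hij := eq_or_ne i j <;> simp [residue, *]

theorem sum_residue_add (f : Fin n → ℕ) :
    ∑ i, (residue q f i : ℕ) + q * ∑ i, f i / q = ∑ i, f i := by
  simp [residue, Finset.mul_sum, ← Finset.sum_add_distrib, Nat.mod_add_div]

theorem eq_of_residue_eq_of_sum_lt {f : Fin n → ℕ} {r : Fin n → Fin q} (hf : residue q f = r)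
    (h : ∑ i, f i < ∑ i, (r i : ℕ) + q) : f = fun i => (r i : ℕ) := by
  subst hf
  have hsum : ∑ i, f i / q = 0 := by
    rw [← sum_residue_add (q := q) f, add_lt_add_iff_left] at h
    exact Nat.lt_one_iff.1 (lt_of_mul_lt_mul_left (h.trans_eq (mul_one q).symm) q.zero_le)
  funext i
  have hi : f i / q = 0 := Finset.sum_eq_zero_iff.1 hsum i (Finset.mem_univ i)
  exact (Nat.mod_eq_of_lt ((Nat.div_eq_zero_iff_lt (NeZero.pos q)).1 hi)).symm

theorem residueBlock_eq_span_single (hq : 2 ≤ q) {r : Fin n → Fin q}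
    (h : ∑ i, (r i : ℕ) + q ≤ d) :
    residueBlock R q d r =
      Submodule.span R (Set.range fun j : {j // (r j : ℕ) ≤ 1} => Pi.single j.1 (1 : R)) := by
  refine le_antisymm (Submodule.span_le.2 ?_) (Submodule.span_le.2 ?_)
  · rintro _ ⟨f, ⟨-, rfl⟩, rfl⟩
    rw [SetLike.mem_coe, pi_eq_sum_univ' (lowIndicator R f)]
    refine Submodule.sum_mem _ fun j _ => ?_
    by_cases hj : f j ≤ 1
    · refine Submodule.smul_mem _ _ (Submodule.subset_span ⟨⟨j, residue_le_one_of_le_one hj⟩, ?_⟩)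
      funext i
      simp [Pi.single_apply]
    · simp [lowIndicator, hj]
  · rintro _ ⟨⟨j, hj⟩, rfl⟩
    let f : Fin n → ℕ := fun i => r i
    have hdiff : Pi.single j (1 : R) = lowIndicator R f - lowIndicator R (f + Pi.single j q) := by
      funext i
      obtain rfl | hij := eq_or_ne i j
      · have : ¬ (r i : ℕ) + q ≤ 1 := by omega
        simp [lowIndicator, f, hj, this]
      · simp [lowIndicator, hij]
    simp only [SetLike.mem_coe, hdiff]
    refine Submodule.sub_mem _ (Submodule.subset_span ⟨f, ⟨?_, residue_coe r⟩, rfl⟩)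
      (Submodule.subset_span ⟨_, ⟨?_, (residue_add_single f j).trans (residue_coe r)⟩, rfl⟩)
    · exact (Nat.le_add_right _ _).trans h
    · simpa [Finset.sum_add_distrib] using h

theorem residueBlock_eq_span_singleton {r : Fin n → Fin q} (hr : ∑ i, (r i : ℕ) ≤ d)
    (h : d < ∑ i, (r i : ℕ) + q) :
    residueBlock R q d r = Submodule.span R {lowIndicator R fun i => (r i : ℕ)} := by
  have hset : {f | ∑ i, f i ≤ d ∧ residue q f = r} = {fun i => (r i : ℕ)} := by
    refine Set.Subset.antisymm (fun f hf => ?_) (Set.singleton_subset_iff.2 ⟨hr, residue_coe r⟩)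
    exact eq_of_residue_eq_of_sum_lt hf.2 (hf.1.trans_lt h)
  rw [residueBlock, hset, Set.image_singleton]

theorem finrank_span_lowIndicator {K : Type*} [Field K] (f : Fin n → ℕ) :
    Module.finrank K (Submodule.span K {lowIndicator K f}) =
      min (Fintype.card {i // f i ≤ 1}) 1 := by
  by_cases hf : ∃ i, f i ≤ 1
  · obtain ⟨i, hi⟩ := hf
    have hne : lowIndicator K f ≠ 0 := fun h0 => by simpa [lowIndicator, hi] using congrFun h0 i
    have hcard : 0 < Fintype.card {i // f i ≤ 1} := Fintype.card_pos_iff.2 ⟨⟨i, hi⟩⟩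
    rw [finrank_span_singleton hne, min_eq_right hcard]
  · have hzero : lowIndicator K f = 0 := funext fun i => if_neg fun hi => hf ⟨i, hi⟩
    have hempty : IsEmpty {i // f i ≤ 1} := ⟨fun i => hf ⟨i, i.2⟩⟩
    simp [hzero]

theorem finrank_residueBlock {K : Type*} [Field K] (hq : 2 ≤ q) {r : Fin n → Fin q}
    (hr : ∑ i, (r i : ℕ) ≤ d) :
    Module.finrank K (residueBlock K q d r) = residueBlockRank q d r := by
  by_cases h : ∑ i, (r i : ℕ) + q ≤ d
  · have hli : LinearIndependent K
        fun j : {j // (r j : ℕ) ≤ 1} => (Pi.single j.1 1 : Fin n → K) := by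
      simpa [Function.comp_def] using
        (Pi.basisFun K (Fin n)).linearIndependent.comp _ Subtype.val_injective
    rw [residueBlock_eq_span_single hq h, finrank_span_eq_card hli, residueBlockRank, if_pos h]
  · rw [residueBlock_eq_span_singleton hr (not_le.1 h), finrank_span_lowIndicator,
      residueBlockRank, if_neg h]

theorem finrank_homogeneousSubmodule_inf_ker_residueSums {K : Type*} [Field K]
    {ω : K} (hω : ω ≠ 0) (hq : 2 ≤ q) (hd : n * (q - 1) ≤ d) :
    ∑ r : Fin n → Fin q, residueBlockRank q d r + Module.finrank K
      ↥(homogeneousSubmodule (Fin (n + 1)) K d ⊓ LinearMap.ker (residueSums K q ω)) =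
        (n + d).choose d := by
  have hfinite : FiniteDimensional K (homogeneousSubmodule (Fin (n + 1)) K d) :=
    Module.Finite.iff_fg.2 (homogeneousSubmodule_fg _ _ _)
  have himage : Module.finrank K ((homogeneousSubmodule (Fin (n + 1)) K d).map
      (residueSums K q ω)) = ∑ r : Fin n → Fin q, residueBlockRank q d r := by
    rw [map_residueSums_homogeneousSubmodule hω.isUnit, finrank_submodule_pi]
    exact Finset.sum_congr rfl fun r _ => finrank_residueBlock hq ((sum_val_le_mul_pred r).trans hd)
  rw [← himage, finrank_map_add_finrank_inf_ker, finrank_homogeneousSubmodule, Fintype.card_fin,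
    Nat.add_right_comm, Nat.add_sub_cancel]

end ResidueSums

theorem prod_update_zero_pow {ι M : Type*} [Fintype ι] [DecidableEq ι] [CommMonoidWithZero M]
    (i : ι) (y : ι → M) (f : ι → ℕ) :
    ∏ j, Function.update y i 0 j ^ f j = if f i = 0 then ∏ j, y j ^ f j else 0 := by
  split_ifs with hi
  · refine Finset.prod_congr rfl fun j _ => ?_
    obtain rfl | hj := eq_or_ne j i
    · rw [hi, pow_zero, pow_zero]
    · rw [Function.update_of_ne hj]
  · exact Finset.prod_eq_zero (Finset.mem_univ i) (by rw [Function.update_self, zero_pow hi])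

section CuspPoint

variable {n : ℕ} {R : Type*} [CommRing R]

/-- The point of the hyperplane section `yᵢ = 0` with first coordinate `1` and the remaining
coordinates taken from `y`; the entry `y i` is ignored. -/
def cuspPoint (i : Fin n) (y : Fin n → R) : Fin (n + 1) → R := Fin.cons 1 (Function.update y i 0)

@[simp]
theorem cuspPoint_zero (i : Fin n) (y : Fin n → R) : cuspPoint i y 0 = 1 := rfl

@[simp]
theorem cuspPoint_succ_self (i : Fin n) (y : Fin n → R) : cuspPoint i y i.succ = 0 := by
  simp [cuspPoint]

theorem cuspPoint_succ_of_ne {i j : Fin n} (h : j ≠ i) (y : Fin n → R) :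
    cuspPoint i y j.succ = y j := by
  simp [cuspPoint, h]

theorem exists_eq_smul_cuspPoint_add_single_iff {i : Fin (n + 1)} {y : Fin (n + 1) → R}
    {w : Fin (n + 2) → R} :
    (∃ a c : R, w = a • cuspPoint i y + Pi.single i.succ c) ↔
      ∀ k, w (i.succAbove k).succ = w 0 * y (i.succAbove k) := by
  constructor
  · rintro ⟨a, c, rfl⟩ k
    simp [cuspPoint_succ_of_ne (Fin.succAbove_ne i _)]
  · intro h
    refine ⟨w 0, w i.succ, ?_⟩
    funext t
    cases t using Fin.cases with
    | zero => simp
    | succ j =>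
      obtain rfl | ⟨k, rfl⟩ := i.eq_self_or_eq_succAbove j
      · simp
      · simp [h, cuspPoint_succ_of_ne (Fin.succAbove_ne i _)]

theorem aeval_cuspPoint_monomial (i : Fin n) (y : Fin n → R) (e : Fin (n + 1) →₀ ℕ) (c : R) :
    aeval (cuspPoint i y) (monomial e c) =
      if e i.succ = 0 then c * ∏ j : Fin n, y j ^ e j.succ else 0 := by
  rw [aeval_monomial, Finsupp.prod_fintype _ _ fun _ => pow_zero _, Fin.prod_univ_succ,
    cuspPoint, Fin.cons_zero, one_pow, one_mul, Algebra.algebraMap_self_apply, ← mul_zero c,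
    ← mul_ite, mul_zero]
  exact congrArg (c * ·) (prod_update_zero_pow i y (Fin.tail e))

theorem aeval_cuspPoint_pderiv_monomial (i : Fin n) (y : Fin n → R) (e : Fin (n + 1) →₀ ℕ)
    (c : R) :
    y i * aeval (cuspPoint i y) (pderiv i.succ (monomial e c)) =
      if e i.succ = 1 then c * ∏ j : Fin n, y j ^ e j.succ else 0 := by
  rw [pderiv_monomial, aeval_cuspPoint_monomial]
  by_cases hi : e i.succ = 1
  · set e' : Fin (n + 1) →₀ ℕ := e - Finsupp.single i.succ 1
    have he' : ∀ j ∈ Finset.univ.erase i, y j ^ e' j.succ = y j ^ e j.succ := fun j hj => by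
      simp [e', (Finset.ne_of_mem_erase hj).symm]
    have hi' : e' i.succ = 0 := by simp [e', hi]
    rw [if_pos hi', if_pos hi, ← Finset.mul_prod_erase _ _ (Finset.mem_univ i),
      ← Finset.mul_prod_erase _ (fun j : Fin n => y j ^ e j.succ) (Finset.mem_univ i),
      Finset.prod_congr rfl he', hi, hi']
    ring
  · obtain h0 | h2 : e i.succ = 0 ∨ e i.succ - 1 ≠ 0 := by omega
    · simp [h0]
    · simp [hi, h2]

variable {q : ℕ} [NeZero q] {ω : R}

theorem eq_sum_residueSums_mul {y : Fin n → R} (hy : ∀ j, y j ^ q = ω) (hq : 2 ≤ q) {i : Fin n}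
    {ε : ℕ} (hε : ε ≤ 1) {φ : MvPolynomial (Fin (n + 1)) R →ₗ[R] R}
    (hφ : ∀ e c, φ (monomial e c) = if e i.succ = ε then c * ∏ j : Fin n, y j ^ e j.succ else 0)
    (g : MvPolynomial (Fin (n + 1)) R) :
    φ g = ∑ r : Fin n → Fin q,
      (if (r i : ℕ) = ε then residueSums R q ω g r i else 0) * ∏ j, y j ^ (r j : ℕ) := by
  induction g using induction_on' with
  | monomial e c =>
    have hterm := residue_eq_and_le_one_iff hε hq (Fin.tail e) i
    have hprod := prod_pow_eq_prod_pow_residue hy (Fin.tail e)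
    rw [Finset.sum_eq_single_of_mem (residue q (Fin.tail e)) (Finset.mem_univ _) fun r _ hr => by
      simp [residueSums_monomial, Pi.single_eq_of_ne hr], hφ, residueSums_monomial]
    simp only [Pi.smul_apply, Pi.single_eq_same, lowIndicator, smul_eq_mul, mul_ite, mul_one,
      mul_zero, ← ite_and, hterm, ite_mul, zero_mul]
    exact if_congr Iff.rfl ((congrArg (c * ·) hprod).trans (mul_assoc _ _ _).symm) rfl
  | add g h hg hh =>
    rw [map_add, hg, hh, ← Finset.sum_add_distrib]
    refine Finset.sum_congr rfl fun r _ => ?_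
    split_ifs <;> simp [add_mul]

theorem aeval_cuspPoint_eq_sum {y : Fin n → R} (hy : ∀ j, y j ^ q = ω) (hq : 2 ≤ q) (i : Fin n)
    (g : MvPolynomial (Fin (n + 1)) R) :
    aeval (cuspPoint i y) g = ∑ r : Fin n → Fin q,
      (if (r i : ℕ) = 0 then residueSums R q ω g r i else 0) * ∏ j, y j ^ (r j : ℕ) :=
  eq_sum_residueSums_mul hy hq zero_le_one (φ := (aeval (cuspPoint i y)).toLinearMap)
    (aeval_cuspPoint_monomial i y) g

theorem aeval_cuspPoint_pderiv_eq_sum {y : Fin n → R} (hy : ∀ j, y j ^ q = ω) (hq : 2 ≤ q)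
    (i : Fin n) (g : MvPolynomial (Fin (n + 1)) R) :
    y i * aeval (cuspPoint i y) (pderiv i.succ g) = ∑ r : Fin n → Fin q,
      (if (r i : ℕ) = 1 then residueSums R q ω g r i else 0) * ∏ j, y j ^ (r j : ℕ) :=
  eq_sum_residueSums_mul hy hq le_rfl
    (φ := y i • (aeval (cuspPoint i y)).toLinearMap ∘ₗ (pderiv i.succ).toLinearMap)
    (aeval_cuspPoint_pderiv_monomial i y) g

theorem residueSums_apply_eq_zero_of_one_lt (g : MvPolynomial (Fin (n + 1)) R) {r : Fin n → Fin q}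
    {i : Fin n} (hi : 1 < (r i : ℕ)) : residueSums R q ω g r i = 0 := by
  induction g using induction_on' with
  | monomial e c =>
    rw [residueSums_monomial]
    obtain rfl | hr := eq_or_ne r (residue q (Fin.tail e))
    · have hlow : ¬ Fin.tail e i ≤ 1 := fun h => hi.not_ge (residue_le_one_of_le_one h)
      simp only [Pi.smul_apply, Pi.single_eq_same, lowIndicator, if_neg hlow, smul_zero]
    · simp [Pi.single_eq_of_ne hr]
  | add g h hg hh => simp [hg, hh]

theorem residueSums_eq_zero_iff [IsDomain R] (hq : 2 ≤ q) (hω : ω ≠ 0)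
    (hroots : q ≤ (Polynomial.nthRootsFinset q ω).card) (g : MvPolynomial (Fin (n + 1)) R) :
    residueSums R q ω g = 0 ↔ ∀ y : Fin n → R, (∀ j, y j ^ q = ω) → ∀ i,
      aeval (cuspPoint i y) g = 0 ∧ aeval (cuspPoint i y) (pderiv i.succ g) = 0 := by
  have hmem (z : R) : z ∈ Polynomial.nthRootsFinset q ω ↔ z ^ q = ω :=
    Polynomial.mem_nthRootsFinset (NeZero.pos q) ω
  constructor
  · intro h y hy i
    have hyi : y i ≠ 0 := fun h0 => hω (by rw [← hy i, h0, zero_pow (NeZero.ne q)])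
    have hderiv := aeval_cuspPoint_pderiv_eq_sum hy hq i g
    refine ⟨?_, (mul_eq_zero.1 (hderiv.trans ?_)).resolve_left hyi⟩
    · simp [aeval_cuspPoint_eq_sum hy hq, h]
    · simp [h]
  · intro h
    funext r i
    have hvalue := eq_zero_of_sum_mul_prod_pow_eq_zero hroots fun y hy =>
      (aeval_cuspPoint_eq_sum (fun j => (hmem _).1 (hy j)) hq i g).symm.trans
        (h y (fun j => (hmem _).1 (hy j)) i).1
    have hderiv := eq_zero_of_sum_mul_prod_pow_eq_zero hroots fun y hy =>
      (aeval_cuspPoint_pderiv_eq_sum (fun j => (hmem _).1 (hy j)) hq i g).symm.trans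
        (mul_eq_zero_of_right _ (h y (fun j => (hmem _).1 (hy j)) i).2)
    obtain hri | hri | hri : (r i : ℕ) = 0 ∨ (r i : ℕ) = 1 ∨ 1 < (r i : ℕ) := by omega
    · simpa [hri] using congrFun hvalue r
    · simpa [hri] using congrFun hderiv r
    · exact residueSums_apply_eq_zero_of_one_lt g hri

end CuspPoint

section CuspConditions

variable {P w : Fin 4 → ℂ} {g : MvPolynomial (Fin 4) ℂ} {d : ℕ}

theorem dirDeriv_apply (P w : Fin 4 → ℂ) (g : MvPolynomial (Fin 4) ℂ) :
    dirDeriv P w g = ∑ t, w t * aeval P (pderiv t g) := by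
  simp [dirDeriv]

theorem dirDeriv_smul_add_single (hg : g.IsHomogeneous d) (P : Fin 4 → ℂ) (a c : ℂ) (t : Fin 4) :
    dirDeriv P (a • P + Pi.single t c) g = a * (d * aeval P g) + c * aeval P (pderiv t g) := by
  rw [← sum_mul_aeval_pderiv_of_isHomogeneous hg]
  simp [dirDeriv_apply, add_mul, Finset.sum_add_distrib, mul_assoc, ← Finset.mul_sum,
    Pi.single_apply]

theorem mem_cuspCondition {Si Sj : MvPolynomial (Fin 4) ℂ} :
    g ∈ cuspCondition P Si Sj ↔
      aeval P g = 0 ∧ ∀ w, dirDeriv P w Si = 0 ∧ dirDeriv P w Sj = 0 → dirDeriv P w g = 0 := by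
  simp [cuspCondition]

/-- The cubics `S₁, S₂, S₃`, indexed from `0`, so that the cusps on the plane of `yᵢ₊₁` carry the
pair `fermatS (i.succAbove 0)`, `fermatS (i.succAbove 1)`. -/
noncomputable def fermatS (k : Fin 3) : MvPolynomial (Fin 4) ℂ := X k.succ ^ 3 + fermatR

theorem dirDeriv_fermatS (P w : Fin 4 → ℂ) (k : Fin 3) :
    dirDeriv P w (fermatS k) = 3 * (P k.succ ^ 2 * w k.succ + ∑ t, P t ^ 2 * w t) := by
  have hX (s : Fin 4) : dirDeriv P w (X s ^ 3) = 3 * (P s ^ 2 * w s) := by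
    simp only [dirDeriv_apply, Derivation.leibniz_pow, Nat.add_one_sub_one, pderiv_X,
      Pi.single_apply, smul_eq_mul, mul_ite, mul_one, mul_zero, smul_ite, nsmul_eq_mul,
      Nat.cast_ofNat, aeval_eq_eval, apply_ite (eval P), map_mul, eval_ofNat, map_pow,
      eval_X, map_zero, Finset.sum_ite_eq, Finset.mem_univ, ↓reduceIte]
    ring
  simp only [fermatS, fermatR, map_add, hX, Fin.sum_univ_four]
  ring

variable {i : Fin 3} {y : Fin 3 → ℂ}

theorem dirDeriv_fermatS_eq_zero_iff (hy : ∀ j, y j ^ 3 = -(1 / 3)) :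
    (dirDeriv (cuspPoint i y) w (fermatS (i.succAbove 0)) = 0 ∧
        dirDeriv (cuspPoint i y) w (fermatS (i.succAbove 1)) = 0) ↔
      ∀ k, w (i.succAbove k).succ = w 0 * y (i.succAbove k) := by
  have hne (j : Fin 3) : y j ^ 2 ≠ 0 := pow_ne_zero _ fun h0 => by simpa [h0] using hy j
  have hk (k : Fin 2) : w (i.succAbove k).succ = w 0 * y (i.succAbove k) ↔
      y (i.succAbove k) ^ 2 * w (i.succAbove k).succ = -(w 0 / 3) := by
    rw [← mul_right_inj' (hne (i.succAbove k))]
    refine Eq.congr_right ?_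
    linear_combination w 0 * hy (i.succAbove k)
  simp only [hk, Fin.forall_fin_two, dirDeriv_fermatS, Fin.sum_univ_succ (n := 3),
    Fin.sum_univ_succAbove _ i, Fin.sum_univ_two, cuspPoint_zero, cuspPoint_succ_self,
    cuspPoint_succ_of_ne (Fin.succAbove_ne i _)]
  constructor
  · rintro ⟨h0, h1⟩
    constructor
    · linear_combination (2 * h0 - h1) / 9
    · linear_combination (2 * h1 - h0) / 9
  · rintro ⟨h0, h1⟩
    constructor
    · linear_combination 6 * h0 + 3 * h1
    · linear_combination 3 * h0 + 6 * h1

theorem mem_cuspCondition_cuspPoint_iff (hg : g.IsHomogeneous d) (hy : ∀ j, y j ^ 3 = -(1 / 3)) :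
    g ∈ cuspCondition (cuspPoint i y) (fermatS (i.succAbove 0)) (fermatS (i.succAbove 1)) ↔
      aeval (cuspPoint i y) g = 0 ∧ aeval (cuspPoint i y) (pderiv i.succ g) = 0 := by
  simp only [mem_cuspCondition, dirDeriv_fermatS_eq_zero_iff hy,
    ← exists_eq_smul_cuspPoint_add_single_iff]
  refine and_congr_right fun hvalue => ⟨fun h => ?_, ?_⟩
  · have hderiv := h _ ⟨0, 1, rfl⟩
    rw [dirDeriv_smul_add_single hg] at hderiv
    simpa using hderiv
  · rintro h _ ⟨a, c, rfl⟩
    simp [dirDeriv_smul_add_single hg, hvalue, h]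

theorem mem_sexticsAdaptedToFermatCusps :
    g ∈ sexticsAdaptedToFermatCusps ↔ g.IsHomogeneous 6 ∧
      ∀ y : Fin 3 → ℂ, (∀ j, y j ^ 3 = -(1 / 3)) → ∀ i,
        g ∈ cuspCondition (cuspPoint i y) (fermatS (i.succAbove 0)) (fermatS (i.succAbove 1)) := by
  have hfirst (y : Fin 3 → ℂ) : cuspPoint 0 y = ![1, 0, y 1, y 2] := by
    funext t; fin_cases t <;> rfl
  have hsecond (y : Fin 3 → ℂ) : cuspPoint 1 y = ![1, y 0, 0, y 2] := by
    funext t; fin_cases t <;> rfl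
  have hthird (y : Fin 3 → ℂ) : cuspPoint 2 y = ![1, y 0, y 1, 0] := by
    funext t; fin_cases t <;> rfl
  have hfamilies (y : Fin 3 → ℂ) :
      (∀ i, g ∈ cuspCondition (cuspPoint i y) (fermatS (i.succAbove 0))
        (fermatS (i.succAbove 1))) ↔
      g ∈ cuspCondition ![1, 0, y 1, y 2] fermatS2 fermatS3 ∧
        g ∈ cuspCondition ![1, y 0, 0, y 2] fermatS1 fermatS3 ∧
        g ∈ cuspCondition ![1, y 0, y 1, 0] fermatS1 fermatS2 := by
    rw [← hfirst, ← hsecond, ← hthird, Fin.forall_fin_succ, Fin.forall_fin_two]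
    rfl
  simp only [sexticsAdaptedToFermatCusps, Submodule.mem_inf, Submodule.mem_iInf,
    mem_homogeneousSubmodule, hfamilies]
  refine and_congr_right fun _ => ⟨fun h y hy => ?_, fun h a b hab => ?_⟩
  · exact ⟨(h _ _ ⟨hy 1, hy 2⟩).1.1, (h _ _ ⟨hy 0, hy 2⟩).1.2, (h _ _ ⟨hy 0, hy 1⟩).2⟩
  · have haab := h ![a, a, b] (by simp [Fin.forall_fin_succ, hab])
    have habb := h ![a, b, b] (by simp [Fin.forall_fin_succ, hab])
    exact ⟨⟨haab.1, habb.2.1⟩, habb.2.2⟩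

theorem sexticsAdaptedToFermatCusps_eq :
    sexticsAdaptedToFermatCusps =
      homogeneousSubmodule (Fin 4) ℂ 6 ⊓ LinearMap.ker (residueSums ℂ 3 (-(1 / 3))) := by
  ext g
  rw [mem_sexticsAdaptedToFermatCusps, Submodule.mem_inf, mem_homogeneousSubmodule,
    LinearMap.mem_ker, residueSums_eq_zero_iff (by norm_num) (by norm_num)
      (card_nthRootsFinset_of_ne_zero (by norm_num)).ge]
  refine and_congr_right fun hg => ?_
  refine forall_congr' fun y => forall_congr' fun hy => forall_congr' fun i => ?_
  exact mem_cuspCondition_cuspPoint_iff hg hy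

end CuspConditions

/-- The conditions at the `27` cusps have rank `51` on the `84`-dimensional space of
sextic forms: the space of adapted sextics has dimension `33`. -/
theorem finrank_sextics_adapted_to_fermat_cusps :
    Module.finrank ℂ ↥sexticsAdaptedToFermatCusps = 33 := by
  have hrank : ∑ r : Fin 3 → Fin 3, residueBlockRank 3 6 r = 51 := by rfl
  have hforms : Nat.choose (3 + 6) 6 = 84 := by rfl
  have hsum := finrank_homogeneousSubmodule_inf_ker_residueSums (n := 3) (q := 3) (d := 6)
    (ω := (-(1 / 3) : ℂ)) (by norm_num) (by norm_num) (by norm_num)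
  rw [hrank, hforms] at hsum
  rw [sexticsAdaptedToFermatCusps_eq]
  exact Nat.add_left_cancel (n := 51) hsum
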